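/- Let X be a real Banach space, let A ⊆ X be a nonempty compact set, let f : X → X satisfy f(A) = A, and let P : X → X be a continuous linear map with P ∘ P = P whose range is a finite-dimensional subspace of dimension m ≥ 1. Suppose there exist constants L ≥ 0, δ ≥ 0 and α > 0 such that for all u, v ∈ A, ‖P(f(u) − f(v))‖ ≤ L‖u − v‖ and ‖(f(u) − f(v)) − P(f(u) − f(v))‖ ≤ δ‖u − v‖, and such that η := αL + 2δ < 1. Then the Hausdorff dimension of A satisfies dim_H(A) ≤ (ln m + m·ln(2 + 4/α)) / (−ln η). -/

import Mathlib

open MeasureTheory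

theorem aux_card {E : Type*} [NormedAddCommGroup E] [NormedSpace ℝ E] [FiniteDimensional ℝ E]
    (s : Finset E) (x : E) (R α : ℝ) (hR : 0 < R) (hα : 0 < α) (hs : ∀ c ∈ s, ‖c - x‖ ≤ R)
    (h : ∀ c ∈ s, ∀ d ∈ s, c ≠ d → α * R < ‖c - d‖) :
    (s.card : ℝ) ≤ (1 + 2 / α) ^ Module.finrank ℝ E := by
  borelize E
  let μ : Measure E := Measure.addHaar
  let δ : ℝ := α * R / 2
  let ρ : ℝ := R + α * R / 2
  have δpos : 0 < δ := by positivity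
  have ρpos : 0 < ρ := by positivity
  set A := ⋃ c ∈ s, Metric.ball (c : E) δ with hA
  have D : Set.Pairwise (s : Set E) (Function.onFun Disjoint fun c => Metric.ball (c : E) δ) := by
    rintro c hc d hd hcd
    apply Metric.ball_disjoint_ball
    rw [dist_eq_norm]
    have := h c hc d hd hcd
    simp only [δ]
    linarith
  have A_subset : A ⊆ Metric.ball x ρ := by
    refine Set.iUnion₂_subset fun c hc => ?_
    apply Metric.ball_subset_ball'
    rw [dist_eq_norm]
    have := hs c hc
    simp only [δ, ρ]
    linarith
  have I : (s.card : ENNReal) * ENNReal.ofReal (δ ^ Module.finrank ℝ E) * μ (Metric.ball 0 1) ≤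
      ENNReal.ofReal (ρ ^ Module.finrank ℝ E) * μ (Metric.ball 0 1) :=
    calc
      _ = μ A := by
        rw [hA, measure_biUnion_finset D fun c _ => measurableSet_ball]
        simp only [μ.addHaar_ball_of_pos _ δpos]
        simp only [Finset.sum_const, nsmul_eq_mul, mul_assoc]
      _ ≤ μ (Metric.ball x ρ) := measure_mono A_subset
      _ = _ := by
        simp only [μ.addHaar_ball_of_pos _ ρpos]
  have J : (s.card : ENNReal) * ENNReal.ofReal (δ ^ Module.finrank ℝ E)
      ≤ ENNReal.ofReal (ρ ^ Module.finrank ℝ E) :=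
    (ENNReal.mul_le_mul_iff_left (Metric.measure_ball_pos _ _ zero_lt_one).ne'
      measure_ball_lt_top.ne).1 I
  have K := ENNReal.toReal_le_of_le_ofReal (pow_nonneg ρpos.le _) J
  rw [ENNReal.toReal_mul, ENNReal.toReal_ofReal (by positivity), ENNReal.toReal_natCast] at K
  have e : ρ = (1 + 2 / α) * δ := by
    simp only [ρ, δ]
    field_simp
    ring
  rw [e, mul_pow] at K
  exact le_of_mul_le_mul_right K (by positivity)

theorem aux_net {E : Type*} [NormedAddCommGroup E] [NormedSpace ℝ E] [FiniteDimensional ℝ E]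
    (B : Set E) (x : E) (R α : ℝ) (hR : 0 ≤ R) (hα : 0 < α) (hs : ∀ c ∈ B, ‖c - x‖ ≤ R) :
    ∃ s : Finset E, (s : Set E) ⊆ B ∧ (s.card : ℝ) ≤ (1 + 2 / α) ^ Module.finrank ℝ E ∧
      ∀ c ∈ B, ∃ d ∈ s, ‖c - d‖ ≤ α * R := by
  classical
  have h1 : (1 : ℝ) ≤ (1 + 2 / α) ^ Module.finrank ℝ E :=
    one_le_pow₀ (by have : 0 < 2 / α := by positivity
                    linarith)
  rcases hR.eq_or_lt with rfl | hR
  · rcases B.eq_empty_or_nonempty with rfl | ⟨b, hb⟩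
    · exact ⟨∅, by simp, by simp; positivity, by simp⟩
    · refine ⟨{b}, by simpa using hb, by simpa using h1, fun c hc => ⟨b, by simp, ?_⟩⟩
      have h2 : c = x := sub_eq_zero.1 (norm_le_zero_iff.1 (hs c hc))
      have h3 : b = x := sub_eq_zero.1 (norm_le_zero_iff.1 (hs b hb))
      simp [h2, h3]
  let good : Finset E → Prop := fun s => (s : Set E) ⊆ B ∧
    ∀ c ∈ s, ∀ d ∈ s, c ≠ d → α * R < ‖c - d‖
  have hgood : ∀ s, good s → (s.card : ℝ) ≤ (1 + 2 / α) ^ Module.finrank ℝ E := fun s h =>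
    aux_card s x R α hR hα (fun c hc => hs c (h.1 hc)) h.2
  let S : Set ℕ := {n | ∃ s, good s ∧ s.card = n}
  have hSne : S.Nonempty := ⟨0, ∅, ⟨by simp, by simp⟩, rfl⟩
  have hSb : BddAbove S := by
    refine ⟨⌊(1 + 2 / α) ^ Module.finrank ℝ E⌋₊, ?_⟩
    rintro n ⟨s, h, rfl⟩
    exact Nat.le_floor (hgood s h)
  obtain ⟨s, hsg, hsc⟩ := Nat.sSup_mem hSne hSb
  refine ⟨s, hsg.1, hgood s hsg, fun c hc => ?_⟩
  by_contra! hcon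
  have hcs : c ∉ s := fun hcs => by
    have := hcon c hcs
    simp only [sub_self, norm_zero] at this
    have : 0 < α * R := by positivity
    linarith
  have hg : good (insert c s) := by
    refine ⟨?_, ?_⟩
    · intro y hy
      rcases Finset.mem_insert.1 (Finset.mem_coe.1 hy) with rfl | hy
      · exact hc
      · exact hsg.1 hy
    · intro y hy z hz hyz
      rcases Finset.mem_insert.1 hy with rfl | hy1 <;> rcases Finset.mem_insert.1 hz with rfl | hz1
      · exact absurd rfl hyz
      · exact hcon z hz1
      · rw [norm_sub_rev]
        exact hcon y hy1
      · exact hsg.2 y hy1 z hz1 hyz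
  have := le_csSup hSb ⟨_, hg, rfl⟩
  rw [Finset.card_insert_of_notMem hcs, ← hsc] at this
  omega

theorem aux_step {X : Type*} [NormedAddCommGroup X] [NormedSpace ℝ X]
    (A : Set X) (f : X → X) (hfA : f '' A = A)
    (P : X →L[ℝ] X) (m : ℕ)
    (hrank : Module.finrank ℝ (LinearMap.range (P : X →ₗ[ℝ] X)) = m) (hm : 1 ≤ m)
    (L δ α : ℝ) (hL : 0 ≤ L) (hδ : 0 ≤ δ) (hα : 0 < α)
    (hPf : ∀ u ∈ A, ∀ v ∈ A, ‖P (f u - f v)‖ ≤ L * ‖u - v‖)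
    (hQf : ∀ u ∈ A, ∀ v ∈ A, ‖(f u - f v) - P (f u - f v)‖ ≤ δ * ‖u - v‖)
    (r : ℝ) (hr : 0 ≤ r) (u : X) (hu : u ∈ A) :
    ∃ s : Finset X, (s : Set X) ⊆ A ∧ (s.card : ℝ) ≤ (1 + 2 / α) ^ m ∧
      ∀ v ∈ A, ‖v - u‖ ≤ r → ∃ w ∈ s, ‖f v - w‖ ≤ (α * L + 2 * δ) * r := by
  classical
  have : FiniteDimensional ℝ (LinearMap.range (P : X →ₗ[ℝ] X)) :=
    Module.finite_of_finrank_pos (by omega)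
  let g : X → LinearMap.range (P : X →ₗ[ℝ] X) := fun v => ⟨P (f v), ⟨f v, rfl⟩⟩
  have hg : ∀ v w, ‖g v - g w‖ = ‖P (f v - f w)‖ := fun v w => by
    rw [map_sub]; rfl
  let B := g '' {v | v ∈ A ∧ ‖v - u‖ ≤ r}
  obtain ⟨s, hsB, hcard, hnet⟩ := aux_net B (g u) (L * r) α (by positivity) hα (by
    rintro _ ⟨v, ⟨hv, hvr⟩, rfl⟩
    rw [hg]
    exact (hPf v hv u hu).trans (by gcongr))
  rw [hrank] at hcard
  have hch : ∀ c : LinearMap.range (P : X →ₗ[ℝ] X), ∃ w, c ∈ B → (w ∈ A ∧ ‖w - u‖ ≤ r) ∧ g w = c := by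
    intro c
    by_cases hc : c ∈ B
    · obtain ⟨w, hw, h⟩ := hc
      exact ⟨w, fun _ => ⟨hw, h⟩⟩
    · exact ⟨0, fun h => absurd h hc⟩
  choose p hp using hch
  refine ⟨s.image (fun c => f (p c)), ?_, ?_, ?_⟩
  · intro y hy
    obtain ⟨c, hc, rfl⟩ := Finset.mem_image.1 (Finset.mem_coe.1 hy)
    rw [← hfA]
    exact ⟨_, (hp c (hsB hc)).1.1, rfl⟩
  · exact le_trans (by exact_mod_cast Finset.card_image_le) hcard
  · intro v hv hvr
    obtain ⟨d, hd, hvd⟩ := hnet (g v) ⟨v, ⟨hv, hvr⟩, rfl⟩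
    obtain ⟨⟨h1, h2⟩, h3⟩ := hp d (hsB hd)
    refine ⟨f (p d), Finset.mem_image.2 ⟨d, hd, rfl⟩, ?_⟩
    rw [← h3, hg] at hvd
    have h4 := hQf v hv _ h1
    have h5 : ‖v - p d‖ ≤ 2 * r := by
      have := norm_sub_le_norm_sub_add_norm_sub v u (p d)
      rw [norm_sub_rev u] at this
      linarith
    have h6 : δ * ‖v - p d‖ ≤ δ * (2 * r) := by gcongr
    have h7 := norm_add_le (P (f v - f (p d))) ((f v - f (p d)) - P (f v - f (p d)))
    rw [add_sub_cancel] at h7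
    nlinarith

theorem aux_cover {X : Type*} [NormedAddCommGroup X] 
    (A : Set X) (f : X → X) (hfA : f '' A = A) (K η R : ℝ) (hK : 0 ≤ K) (hη : 0 ≤ η) (hR : 0 ≤ R)
    (u₀ : X) (hu₀ : u₀ ∈ A) (hAR : ∀ v ∈ A, ‖v - u₀‖ ≤ R)
    (H : ∀ r : ℝ, 0 ≤ r → ∀ u ∈ A, ∃ s : Finset X, (s : Set X) ⊆ A ∧ (s.card : ℝ) ≤ K ∧
      ∀ v ∈ A, ‖v - u‖ ≤ r → ∃ w ∈ s, ‖f v - w‖ ≤ η * r) (n : ℕ) :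
    ∃ s : Finset X, (s : Set X) ⊆ A ∧ (s.card : ℝ) ≤ K ^ n ∧
      ∀ v ∈ A, ∃ w ∈ s, ‖v - w‖ ≤ η ^ n * R := by
  classical
  induction n with
  | zero => exact ⟨{u₀}, by simpa using hu₀, by simp, fun v hv => ⟨u₀, by simp, by simpa using hAR v hv⟩⟩
  | succ n ih =>
    obtain ⟨s, hsA, hsc, hs⟩ := ih
    choose! t ht1 ht2 ht3 using H (η ^ n * R) (by positivity)
    refine ⟨s.biUnion t, ?_, ?_, ?_⟩
    · intro y hy
      obtain ⟨c, hc, h⟩ := Finset.mem_biUnion.1 (Finset.mem_coe.1 hy)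
      exact ht1 c (hsA hc) h
    · calc ((s.biUnion t).card : ℝ) ≤ ((∑ a ∈ s, (t a).card : ℕ) : ℝ) := by
            exact_mod_cast Finset.card_biUnion_le
        _ = ∑ a ∈ s, ((t a).card : ℝ) := by push_cast; rfl
        _ ≤ ∑ a ∈ s, K := Finset.sum_le_sum fun a ha => ht2 a (hsA ha)
        _ = s.card * K := by simp
        _ ≤ K ^ n * K := by gcongr
        _ = K ^ (n + 1) := by ring
    · intro v hv
      rw [← hfA] at hv
      obtain ⟨v, hv, rfl⟩ := hv
      obtain ⟨w, hw, hvw⟩ := hs v hv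
      obtain ⟨z, hz, h⟩ := ht3 w (hsA hw) v hv hvw
      exact ⟨z, Finset.mem_biUnion.2 ⟨w, hw, hz⟩, h.trans_eq (by ring)⟩

theorem aux_dim {X : Type*} [NormedAddCommGroup X] [MeasurableSpace X] [BorelSpace X]
    (A : Set X) (K η R D : ℝ) (hK : 0 ≤ K) (hη : 0 < η) (hη1 : η < 1) (hR : 0 ≤ R) (hD : 0 ≤ D)
    (hKD : K * η ^ D ≤ 1)
    (H : ∀ n : ℕ, ∃ s : Finset X, (s.card : ℝ) ≤ K ^ n ∧
      ∀ v ∈ A, ∃ w ∈ s, ‖v - w‖ ≤ η ^ n * R) : dimH A ≤ ENNReal.ofReal D := by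
  choose s hsc hs using H
  apply dimH_le_of_hausdorffMeasure_ne_top
  rw [Real.coe_toNNReal _ hD]
  have hdiam : ∀ (n : ℕ) (x : X), Metric.ediam (Metric.closedBall x (η ^ n * R)) ≤
      ENNReal.ofReal (2 * (η ^ n * R)) := by
    intro n x
    refine Metric.ediam_le fun y hy z hz => ?_
    rw [edist_dist]
    apply ENNReal.ofReal_le_ofReal
    have := dist_triangle_right y z x
    rw [Metric.mem_closedBall] at hy hz
    linarith
  have key := Measure.hausdorffMeasure_le_liminf_sum (ι := fun n => s n) D A (l := Filter.atTop)
    (fun n : ℕ => ENNReal.ofReal (2 * (η ^ n * R))) (by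
      rw [← ENNReal.ofReal_zero]
      refine ENNReal.tendsto_ofReal ?_
      have := ((tendsto_pow_atTop_nhds_zero_of_lt_one hη.le hη1).mul_const R).const_mul 2
      simpa using this)
    (fun n i => Metric.closedBall (i : X) (η ^ n * R))
    (Filter.Eventually.of_forall fun n i => hdiam n i)
    (Filter.Eventually.of_forall fun n v hv => by
      obtain ⟨w, hw, h⟩ := hs n v hv
      exact Set.mem_iUnion.2 ⟨⟨w, hw⟩, by simpa [dist_eq_norm] using h⟩)
  refine ne_top_of_le_ne_top (b := ENNReal.ofReal ((2 * R) ^ D)) ENNReal.ofReal_ne_top (key.trans ?_)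
  refine Filter.liminf_le_of_le (by isBoundedDefault) fun b hb => ?_
  obtain ⟨n, hn⟩ := hb.exists
  refine hn.trans ?_
  calc ∑ i : s n, Metric.ediam (Metric.closedBall (i : X) (η ^ n * R)) ^ D
      ≤ ∑ i : s n, ENNReal.ofReal (2 * (η ^ n * R)) ^ D :=
        Finset.sum_le_sum fun i _ => ENNReal.rpow_le_rpow (hdiam n i) hD
    _ = ENNReal.ofReal ((s n).card * (2 * (η ^ n * R)) ^ D) := by
        rw [ENNReal.ofReal_rpow_of_nonneg (by positivity) hD, ENNReal.ofReal_mul (by positivity)]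
        simp
    _ ≤ _ := by
        apply ENNReal.ofReal_le_ofReal
        have e : (2 * (η ^ n * R)) ^ D = (η ^ D) ^ n * (2 * R) ^ D := by
          rw [show 2 * (η ^ n * R) = η ^ n * (2 * R) by ring,
            Real.mul_rpow (by positivity) (by positivity), ← Real.rpow_natCast, ← Real.rpow_natCast,
            ← Real.rpow_mul hη.le, ← Real.rpow_mul hη.le, mul_comm D]
        rw [e, ← mul_assoc]
        refine mul_le_of_le_one_left (by positivity) ?_
        calc _ ≤ K ^ n * (η ^ D) ^ n := by gcongr; exact hsc n
          _ = (K * η ^ D) ^ n := by rw [mul_pow]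
          _ ≤ 1 := pow_le_one₀ (by positivity) hKD

/-- If a compact invariant set `A = f(A)` admits a finite-rank projection `P` of rank
`m ≥ 1` with the squeezing estimates `‖P(f u − f v)‖ ≤ L‖u−v‖`,
`‖(I−P)(f u − f v)‖ ≤ δ‖u−v‖` on `A` and `η := αL + 2δ < 1`, then
`dim_H A ≤ (ln m + m ln(2+4/α)) / (−ln η)`. -/
theorem stmt_9 {X : Type*} [NormedAddCommGroup X] [NormedSpace ℝ X] [CompleteSpace X]
    [MeasurableSpace X] [BorelSpace X]
    (A : Set X) (hA : A.Nonempty) (hAc : IsCompact A)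
    (f : X → X) (hfA : f '' A = A)
    (P : X →L[ℝ] X) (hproj : ∀ z : X, P (P z) = P z) (m : ℕ)
    (hrank : Module.finrank ℝ (LinearMap.range (P : X →ₗ[ℝ] X)) = m) (hm : 1 ≤ m)
    (L δ α : ℝ) (hL : 0 ≤ L) (hδ : 0 ≤ δ) (hα : 0 < α)
    (hPf : ∀ u ∈ A, ∀ v ∈ A, ‖P (f u - f v)‖ ≤ L * ‖u - v‖)
    (hQf : ∀ u ∈ A, ∀ v ∈ A, ‖(f u - f v) - P (f u - f v)‖ ≤ δ * ‖u - v‖)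
    (hη : α * L + 2 * δ < 1) :
    dimH A ≤ ENNReal.ofReal
      ((Real.log m + m * Real.log (2 + 4 / α)) / (-Real.log (α * L + 2 * δ))) := by
  have hη0 : 0 ≤ α * L + 2 * δ := by positivity
  rcases hη0.eq_or_lt with h0 | hpos
  · have hαL : 0 ≤ α * L := by positivity
    have hδ0 : δ = 0 := by linarith
    have hL0 : L = 0 := by
      have : α * L = 0 := by linarith
      rcases mul_eq_zero.1 this with h | h
      · linarith
      · exact h
    subst hδ0 hL0
    have : A.Subsingleton := by
      rw [← hfA]
      rintro _ ⟨u, hu, rfl⟩ _ ⟨v, hv, rfl⟩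
      have h1 := hPf u hu v hv
      have h2 := hQf u hu v hv
      rw [zero_mul] at h1 h2
      rw [norm_le_zero_iff] at h1 h2
      rw [h1, sub_zero] at h2
      exact sub_eq_zero.1 h2
    rw [this.dimH_zero]
    exact zero_le
  obtain ⟨u₀, hu₀⟩ := hA
  obtain ⟨R, hR⟩ := hAc.isBounded.subset_closedBall u₀
  have hAR : ∀ v ∈ A, ‖v - u₀‖ ≤ R := fun v hv => by simpa [dist_eq_norm] using hR hv
  have hR0 : 0 ≤ R := (norm_nonneg _).trans (hAR u₀ hu₀)
  have hm' : (1 : ℝ) ≤ m := by exact_mod_cast hm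
  have h2α : 0 < 2 / α := by positivity
  have h4α : 0 < 4 / α := by positivity
  have h24 : 2 / α ≤ 4 / α := by gcongr; norm_num
  have hlog : Real.log (α * L + 2 * δ) < 0 := Real.log_neg hpos hη
  set η := α * L + 2 * δ with hηdef
  refine aux_dim A ((1 + 2 / α) ^ m) η R _ (by positivity) hpos hη hR0 ?_ ?_ fun n => ?_
  · apply div_nonneg
    · have := Real.log_nonneg hm'
      have := Real.log_nonneg (show 1 ≤ 2 + 4 / α by linarith)
      positivity
    · linarith
  · have e : η ^ ((Real.log m + m * Real.log (2 + 4 / α)) / (-Real.log η))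
        = (m * (2 + 4 / α) ^ m)⁻¹ := by
      rw [Real.rpow_def_of_pos hpos]
      rw [show Real.log η * ((Real.log m + m * Real.log (2 + 4 / α)) / (-Real.log η))
        = -(Real.log m + m * Real.log (2 + 4 / α)) by
          rw [div_neg, mul_neg, mul_div_cancel₀ _ hlog.ne]]
      rw [Real.exp_neg, Real.exp_add, Real.exp_log (by linarith), Real.exp_nat_mul,
        Real.exp_log (by linarith)]
    rw [e, ← div_eq_mul_inv]
    refine div_le_one_of_le₀ ?_ (by positivity)
    calc (1 + 2 / α) ^ m ≤ (2 + 4 / α) ^ m := by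
          apply pow_le_pow_left₀ <;> linarith
      _ ≤ _ := le_mul_of_one_le_left (by positivity) hm'
  · obtain ⟨s, _, h⟩ := aux_cover A f hfA ((1 + 2 / α) ^ m) η R (by positivity) hη0 hR0 u₀ hu₀ hAR
      (fun r hr u hu => aux_step A f hfA P m hrank hm L δ α hL hδ hα hPf hQf r hr u hu) n
    exact ⟨s, h⟩
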